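/- arXiv:1608.03351 — 5 statements merged into one kernel-verified Lean document; each statement's English description precedes it below -/
import Mathlib

section
/- Let L be a positive integer, let P_{u,1},…,P_{u,L}, σ_{u,1}²,…,σ_{u,L}², P_{d,1},…,P_{d,L}, σ_{d,1}²,…,σ_{d,L}² be positive real numbers, and let π_u and π_d be permutations of {1,…,L}. Suppose the effective SINRs agree, i.e., P_{u,ℓ}/σ_{u,ℓ}² = P_{d,ℓ}/σ_{d,ℓ}² for every ℓ, and suppose the uplink rates R_{u,ℓ} := (1/2)·log⁺(P_{u,ℓ}/σ_{u,π_u(ℓ)}²) are strictly positive for every ℓ. Define the downlink rates R_{d,ℓ} := (1/2)·log⁺(P_{d,π_d(ℓ)}/σ_{d,ℓ}²). Then the downlink sum rate is at least the uplink sum rate: ∑_{ℓ=1}^L R_{d,ℓ} ≥ ∑_{ℓ=1}^L R_{u,ℓ}. -/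
/-!
A sum of logarithms of ratios does not see how numerators and denominators are paired:
`sum_logb_div_perm` shows that permuting them leaves the sum equal to that of
`logb 2 (P ℓ / σ ℓ)`, which by assumption is the same for uplink and downlink. Positivity of
the uplink rates makes the truncation `log⁺` inactive there, whereas on the downlink the
truncation can only increase each term.
-/

/-- Both the powers and the noise levels may be permuted without changing the sum of log-ratios,
since the sum splits as `∑ logb P - ∑ logb σ`. -/
theorem sum_logb_div_perm {ι : Type*} [Fintype ι] (P σ : ι → ℝ)
    (hP : ∀ i, 0 < P i) (hσ : ∀ i, 0 < σ i) (π ρ : Equiv.Perm ι) :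
    ∑ i, Real.logb 2 (P (π i) / σ (ρ i)) = ∑ i, Real.logb 2 (P i / σ i) := by
  simp only [fun i j => Real.logb_div (b := 2) (hP i).ne' (hσ j).ne', Finset.sum_sub_distrib]
  rw [Equiv.sum_comp π (fun i => Real.logb 2 (P i)),
    Equiv.sum_comp ρ (fun i => Real.logb 2 (σ i))]

/-- Sum-rate duality (Lemma 1): if the componentwise effective SINRs agree between
uplink and downlink, and the (permuted) uplink rates are all strictly positive,
then the downlink sum rate is at least the uplink sum rate. -/
theorem sum_rate_duality
    (L : ℕ) (hL : 0 < L)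
    (Pu σu Pd σd : Fin L → ℝ)
    (hPu : ∀ ℓ, 0 < Pu ℓ) (hσu : ∀ ℓ, 0 < σu ℓ)
    (hPd : ∀ ℓ, 0 < Pd ℓ) (hσd : ∀ ℓ, 0 < σd ℓ)
    (πu πd : Equiv.Perm (Fin L))
    (hSINR : ∀ ℓ, Pu ℓ / σu ℓ = Pd ℓ / σd ℓ)
    (hpos : ∀ ℓ, 0 < (1/2 : ℝ) * max 0 (Real.logb 2 (Pu ℓ / σu (πu ℓ)))) :
    (∑ ℓ, (1/2 : ℝ) * max 0 (Real.logb 2 (Pd (πd ℓ) / σd ℓ))) ≥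
      ∑ ℓ, (1/2 : ℝ) * max 0 (Real.logb 2 (Pu ℓ / σu (πu ℓ))) := by
  have hmax : ∀ ℓ, max 0 (Real.logb 2 (Pu ℓ / σu (πu ℓ))) = Real.logb 2 (Pu ℓ / σu (πu ℓ)) := by
    intro ℓ
    rcases max_cases 0 (Real.logb 2 (Pu ℓ / σu (πu ℓ))) with h | h
    · linarith [hpos ℓ, h.1]
    · exact h.1
  have hu := sum_logb_div_perm Pu σu hPu hσu 1 πu
  have hd := sum_logb_div_perm Pd σd hPd hσd πd 1
  simp only [Equiv.Perm.coe_one, id_eq] at hu hd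
  simp only [hmax, ← Finset.mul_sum, ge_iff_le]
  rw [hu]
  simp only [hSINR]
  rw [← hd]
  gcongr
  exact le_max_right _ _
end

section
/- Let L, N be positive integers with per-user antenna counts M_1,…,M_L. Fix matrices H_ℓ ∈ ℝ^{N×M_ℓ}, equalization vectors b_m ∈ ℝ^N with b_m ≠ 0, beamforming vectors c_ℓ ∈ ℝ^{M_ℓ}, and powers P_1,…,P_L ≥ 0. Define the uplink SINRs SINR_{u,m} := P_m·(b_mᵀ H_m c_m)² / (‖b_m‖² + ∑_{ℓ≠m} P_ℓ·(b_mᵀ H_ℓ c_ℓ)²), and assume SINR_{u,m} > 0 for all m. Then there exist unique non-negative reals Q_1,…,Q_L such that the downlink SINRs SINR_{d,m} := Q_m·(c_mᵀ H_mᵀ b_m)² / (‖c_m‖² + ∑_{ℓ≠m} Q_ℓ·(c_mᵀ H_mᵀ b_ℓ)²) satisfy SINR_{d,m} = SINR_{u,m} for every m, and the total powers agree: ∑_{ℓ=1}^L Q_ℓ·‖b_ℓ‖² = ∑_{ℓ=1}^L P_ℓ·‖c_ℓ‖². -/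
open Matrix

/-!
Write `G m ℓ = (b_mᵀ H_ℓ c_ℓ)²`. Clearing (positive) denominators, the uplink SINR equations
become a linear system `A P = β` with `A m m = G m m / SINR_m`, `A m ℓ = -G m ℓ` off the
diagonal, and `β m = ‖b_m‖²`, while the downlink equations become the transposed system
`Aᵀ Q = γ` with `γ m = ‖c_m‖²`. Since `A` has nonpositive off-diagonal entries and maps the positive
vector `P` to the positive vector `β`, it is a nonsingular M-matrix: `A x ≥ 0` forces `x ≥ 0`
(`nonneg_of_mulVec_nonneg`). Hence `A` is invertible with entrywise nonnegative inverse, so the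
transposed system has a unique solution, and it is nonnegative (`exists_transpose_solution`).
The power identity is `Q ⬝ β = Q ⬝ A P = Aᵀ Q ⬝ P = γ ⬝ P`.
-/

/-- A matrix with nonpositive off-diagonal entries that sends some positive vector to a positive
vector is monotone. At an index minimizing `x i / p i`, with minimum `t < 0`, the vector
`x - t p ≥ 0` vanishes, so `A (x - t p)` is nonpositive there, whereas `A x - t A p` is positive. -/
lemma nonneg_of_mulVec_nonneg {ι : Type*} [Fintype ι] {A : Matrix ι ι ℝ}
    (hA : ∀ i j, i ≠ j → A i j ≤ 0) {p : ι → ℝ} (hp : ∀ i, 0 < p i)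
    (hAp : ∀ i, 0 < (A *ᵥ p) i) {x : ι → ℝ} (hx : ∀ i, 0 ≤ (A *ᵥ x) i) (i : ι) :
    0 ≤ x i := by
  obtain ⟨m, -, hm⟩ := Finset.exists_min_image Finset.univ (fun j => x j / p j)
    ⟨i, Finset.mem_univ i⟩
  by_contra! hi
  have ht : x m / p m < 0 := (hm i (Finset.mem_univ i)).trans_lt (div_neg_of_neg_of_pos hi (hp i))
  set t := x m / p m with htdef
  have hle : (A *ᵥ (x - t • p)) m ≤ 0 := by
    refine Finset.sum_nonpos fun j _ => ?_
    rcases eq_or_ne m j with rfl | hne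
    · have : (x - t • p) m = 0 := by
        simp [htdef, div_mul_cancel₀ _ (hp m).ne']
      simp [this]
    · refine mul_nonpos_of_nonpos_of_nonneg (hA m j hne) ?_
      have := (le_div_iff₀ (hp j)).1 (hm j (Finset.mem_univ j))
      simpa using this
  rw [mulVec_sub, mulVec_smul, Pi.sub_apply, Pi.smul_apply, smul_eq_mul] at hle
  nlinarith [hx m, mul_pos_of_neg_of_neg ht (neg_neg_of_pos (hAp m))]

/-- For such a matrix, the transposed system with nonnegative right-hand side has a unique
solution, and this solution is nonnegative. -/
lemma exists_transpose_solution {ι : Type*} [Fintype ι] [DecidableEq ι] {A : Matrix ι ι ℝ}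
    (hA : ∀ i j, i ≠ j → A i j ≤ 0) {p : ι → ℝ} (hp : ∀ i, 0 < p i)
    (hAp : ∀ i, 0 < (A *ᵥ p) i) {g : ι → ℝ} (hg : ∀ i, 0 ≤ g i) :
    ∃ q : ι → ℝ, (∀ i, 0 ≤ q i) ∧ q ᵥ* A = g ∧ ∀ q', q' ᵥ* A = g → q' = q := by
  have hmono := fun {x : ι → ℝ} => nonneg_of_mulVec_nonneg hA hp hAp (x := x)
  have hinj : Function.Injective A.mulVec := by
    intro x y hxy
    have hxy : A *ᵥ x = A *ᵥ y := hxy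
    funext i
    have h1 := hmono (x := x - y) (by simp [mulVec_sub, hxy]) i
    have h2 := hmono (x := y - x) (by simp [mulVec_sub, hxy]) i
    simp only [Pi.sub_apply] at h1 h2
    linarith
  have hu : IsUnit A := mulVec_injective_iff_isUnit.1 hinj
  have hdet : IsUnit A.det := (isUnit_iff_isUnit_det A).1 hu
  have hinv : ∀ i j, 0 ≤ A⁻¹ i j := by
    intro i j
    -- The `j`-th column of `A⁻¹` is mapped by `A` to the `j`-th unit vector.
    refine hmono (x := fun k => A⁻¹ k j) (fun k => ?_) i
    have : (A *ᵥ fun k => A⁻¹ k j) k = (A * A⁻¹) k j := rfl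
    rw [this, mul_nonsing_inv A hdet, one_apply]
    split_ifs <;> norm_num
  refine ⟨g ᵥ* A⁻¹, fun i => Finset.sum_nonneg fun j _ => mul_nonneg (hg j) (hinv j i), ?_, ?_⟩
  · rw [vecMul_vecMul, nonsing_inv_mul A hdet, vecMul_one]
  · rintro q' rfl
    rw [vecMul_vecMul, mul_nonsing_inv A hdet, vecMul_one]

/-- Classical SINR uplink-downlink duality for conventional linear architectures
(Theorem 1, Viswanath–Tse): if all uplink SINRs are positive, there exist unique
non-negative downlink powers `Q` realizing the same SINRs on the dual downlink
channel, with the same total power consumption. -/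
theorem classical_sinr_duality
    (L N : ℕ) (Mdim : Fin L → ℕ)
    (H : ∀ ℓ, Matrix (Fin N) (Fin (Mdim ℓ)) ℝ)
    (b : Fin L → Fin N → ℝ) (hb : ∀ m, b m ≠ 0)
    (c : ∀ ℓ, Fin (Mdim ℓ) → ℝ)
    (P : Fin L → ℝ) (hP : ∀ ℓ, 0 ≤ P ℓ)
    (SINRu : Fin L → ℝ)
    (hSINRu : ∀ m, SINRu m = P m * (b m ⬝ᵥ (H m).mulVec (c m))^2 /
        ((∑ i, (b m i)^2) +
          ∑ ℓ ∈ Finset.univ.erase m, P ℓ * (b m ⬝ᵥ (H ℓ).mulVec (c ℓ))^2))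
    (hpos : ∀ m, 0 < SINRu m) :
    ∃ Q : Fin L → ℝ,
      (∀ ℓ, 0 ≤ Q ℓ) ∧
      (∀ m, Q m * (c m ⬝ᵥ (H m)ᵀ.mulVec (b m))^2 /
          ((∑ i, (c m i)^2) +
            ∑ ℓ ∈ Finset.univ.erase m, Q ℓ * (c m ⬝ᵥ (H m)ᵀ.mulVec (b ℓ))^2)
        = SINRu m) ∧
      (∑ ℓ, Q ℓ * ∑ i, (b ℓ i)^2) = (∑ ℓ, P ℓ * ∑ i, (c ℓ i)^2) ∧
      ∀ Q' : Fin L → ℝ, (∀ ℓ, 0 ≤ Q' ℓ) →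
        (∀ m, Q' m * (c m ⬝ᵥ (H m)ᵀ.mulVec (b m))^2 /
          ((∑ i, (c m i)^2) +
            ∑ ℓ ∈ Finset.univ.erase m, Q' ℓ * (c m ⬝ᵥ (H m)ᵀ.mulVec (b ℓ))^2)
          = SINRu m) →
        Q' = Q := by
  classical
  set G : Fin L → Fin L → ℝ := fun m ℓ => (b m ⬝ᵥ (H ℓ).mulVec (c ℓ))^2 with hG
  have hdual : ∀ m ℓ, (c m ⬝ᵥ (H m)ᵀ.mulVec (b ℓ))^2 = G ℓ m := by
    intro m ℓ
    simp only [hG]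
    rw [mulVec_transpose, dotProduct_comm, dotProduct_mulVec]
  have hG0 : ∀ m ℓ, 0 ≤ G m ℓ := fun m ℓ => sq_nonneg _
  simp only [hdual]
  set β : Fin L → ℝ := fun m => ∑ i, (b m i)^2 with hβ
  set γ : Fin L → ℝ := fun m => ∑ i, (c m i)^2 with hγ
  have hSINRu' : ∀ m, SINRu m = P m * G m m / (β m + ∑ ℓ ∈ Finset.univ.erase m, P ℓ * G m ℓ) :=
    hSINRu
  have sq_sum_pos : ∀ {n : ℕ} (v : Fin n → ℝ), v ≠ 0 → 0 < ∑ i, (v i)^2 := by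
    intro n v hv
    obtain ⟨i, hi⟩ := Function.ne_iff.1 hv
    exact Finset.sum_pos' (fun j _ => sq_nonneg _) ⟨i, Finset.mem_univ i, sq_pos_of_ne_zero hi⟩
  have hβ0 : ∀ m, 0 < β m := fun m => sq_sum_pos _ (hb m)
  have hprod : ∀ m, P m * G m m ≠ 0 := by
    intro m h
    have := hpos m
    rw [hSINRu' m, h, zero_div] at this
    exact lt_irrefl _ this
  have hP0 : ∀ m, 0 < P m := fun m => (hP m).lt_of_ne' (left_ne_zero_of_mul (hprod m))
  have hγ0 : ∀ m, 0 < γ m := by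
    intro m
    refine sq_sum_pos _ fun hc => right_ne_zero_of_mul (hprod m) ?_
    simp [hG, hc]
  set A : Matrix (Fin L) (Fin L) ℝ :=
    Matrix.of fun m ℓ => if m = ℓ then G m m / SINRu m else - G m ℓ with hAdef
  have hdiag : ∀ m, A m m = G m m / SINRu m := fun m => by simp [hAdef]
  have hoff : ∀ m ℓ, m ≠ ℓ → A m ℓ = - G m ℓ := fun m ℓ h => by simp [hAdef, h]
  have hrow : ∀ (x : Fin L → ℝ) m, (A *ᵥ x) m =
      x m * G m m / SINRu m - ∑ ℓ ∈ Finset.univ.erase m, x ℓ * G m ℓ := by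
    intro x m
    change ∑ ℓ, A m ℓ * x ℓ = _
    rw [← Finset.add_sum_erase _ _ (Finset.mem_univ m), hdiag, sub_eq_add_neg,
      ← Finset.sum_neg_distrib]
    congr 1
    · ring
    · refine Finset.sum_congr rfl fun ℓ hℓ => ?_
      rw [hoff m ℓ (Finset.ne_of_mem_erase hℓ).symm]
      ring
  have hcol : ∀ (x : Fin L → ℝ) m, (x ᵥ* A) m =
      x m * G m m / SINRu m - ∑ ℓ ∈ Finset.univ.erase m, x ℓ * G ℓ m := by
    intro x m
    change ∑ ℓ, x ℓ * A ℓ m = _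
    rw [← Finset.add_sum_erase _ _ (Finset.mem_univ m), hdiag, sub_eq_add_neg,
      ← Finset.sum_neg_distrib]
    congr 1
    · ring
    · refine Finset.sum_congr rfl fun ℓ hℓ => ?_
      rw [hoff ℓ m (Finset.ne_of_mem_erase hℓ)]
      ring
  -- Clearing denominators in an SINR equation.
  have hclear : ∀ {u s n S : ℝ}, 0 < s → 0 < n → 0 ≤ S →
      (u / (n + S) = s ↔ u / s - S = n) := by
    intro u s n S hs hn hS
    rw [div_eq_iff (by positivity), sub_eq_iff_eq_add, div_eq_iff hs.ne', mul_comm s]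
  have hAP : A *ᵥ P = β := by
    funext m
    rw [hrow]
    exact (hclear (hpos m) (hβ0 m)
      (Finset.sum_nonneg fun ℓ _ => mul_nonneg (hP ℓ) (hG0 m ℓ))).1 (hSINRu' m).symm
  have hdown : ∀ q : Fin L → ℝ, (∀ ℓ, 0 ≤ q ℓ) →
      ((∀ m, q m * G m m / (γ m + ∑ ℓ ∈ Finset.univ.erase m, q ℓ * G ℓ m) = SINRu m) ↔
        q ᵥ* A = γ) := by
    intro q hq
    rw [funext_iff]
    refine forall_congr' fun m => ?_
    rw [hcol]
    exact hclear (hpos m) (hγ0 m) (Finset.sum_nonneg fun ℓ _ => mul_nonneg (hq ℓ) (hG0 ℓ m))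
  obtain ⟨Q, hQ0, hQ, huniq⟩ := exists_transpose_solution (A := A) (p := P) (g := γ)
    (fun i j hij => by rw [hoff i j hij]; exact neg_nonpos.2 (hG0 i j)) hP0
    (fun i => by rw [hAP]; exact hβ0 i) (fun i => (hγ0 i).le)
  refine ⟨Q, hQ0, (hdown Q hQ0).2 hQ, ?_, fun Q' hQ'0 hQ' => huniq Q' ((hdown Q' hQ'0).1 hQ')⟩
  change Q ⬝ᵥ β = P ⬝ᵥ γ
  rw [← hAP, dotProduct_mulVec, hQ, dotProduct_comm]
end

section
/- Let H ∈ ℝ^{N×M}, C ∈ ℝ^{M×L}, let P ∈ ℝ^{L×L} be a diagonal matrix with strictly positive diagonal entries, and let a ∈ ℝ^L. Consider the function f(b) := ‖b‖² + ‖(bᵀHC − aᵀ)P^{1/2}‖² on b ∈ ℝ^N, where P^{1/2} is the diagonal matrix of square roots. Then f has a unique minimizer, given by b*ᵀ = aᵀ·P·Cᵀ·Hᵀ·(I + H·C·P·Cᵀ·Hᵀ)⁻¹, and the minimum value is f(b*) = aᵀ·(P⁻¹ + Cᵀ·Hᵀ·H·C)⁻¹·a. In particular, both I + HCPCᵀHᵀ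 and P⁻¹ + CᵀHᵀHC are invertible. -/
/-!
Write `G = H C`, so that `f b = ‖b‖² + ∑ ℓ, Pd ℓ * ((bᵀG - aᵀ) ℓ)²`. Both `K1 = I + G P Gᵀ` and
`K2 = P⁻¹ + Gᵀ G` are positive definite, hence invertible. Put `s = P (a - Gᵀ b*)`, the weighted
residual at the claimed minimizer. The equation `K1 b* = G P a` says exactly `b* = G s`, which is
the stationarity condition for `f`. Completing the square then gives
`f (b* + d) = f b* + ‖d‖² + ∑ ℓ, Pd ℓ * ((dᵀG) ℓ)²`, so `b*` is the unique minimizer, and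
`f b* = ⟨b*, G s⟩ - ⟨Gᵀ b* - a, s⟩ = ⟨a, s⟩`. Finally
`K2 s = (a - Gᵀ b*) + Gᵀ G s = a`, so `s = K2⁻¹ a`.
-/

open Matrix

/-- The value of the objective at a stationary point `b = G s`, where `s` is the weighted
residual `Pd * (a - Gᵀ b)`. -/
lemma value_of_stationary {N L : ℕ} (G : Matrix (Fin N) (Fin L) ℝ) (Pd a s : Fin L → ℝ)
    (b : Fin N → ℝ) (hs : ∀ ℓ, s ℓ = Pd ℓ * (a ℓ - (b ᵥ* G) ℓ)) (hb : b = G *ᵥ s) :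
    (∑ i, (b i)^2) + ∑ ℓ, Pd ℓ * ((b ᵥ* G) ℓ - a ℓ)^2 = a ⬝ᵥ s := by
  have h1 : ∑ i, (b i)^2 = (b ᵥ* G) ⬝ᵥ s := by
    rw [← dotProduct_mulVec, ← hb]
    simp [dotProduct, sq]
  rw [h1]
  simp only [dotProduct]
  rw [← Finset.sum_add_distrib]
  refine Finset.sum_congr rfl fun ℓ _ => ?_
  rw [hs]
  ring

/-- Completing the square around a stationary point `b = G s`: the cross terms cancel. -/
lemma expand_of_stationary {N L : ℕ} (G : Matrix (Fin N) (Fin L) ℝ) (Pd a s : Fin L → ℝ)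
    (b d : Fin N → ℝ) (hs : ∀ ℓ, s ℓ = Pd ℓ * (a ℓ - (b ᵥ* G) ℓ)) (hb : b = G *ᵥ s) :
    (∑ i, ((b + d) i)^2) + ∑ ℓ, Pd ℓ * (((b + d) ᵥ* G) ℓ - a ℓ)^2
      = ((∑ i, (b i)^2) + ∑ ℓ, Pd ℓ * ((b ᵥ* G) ℓ - a ℓ)^2)
        + ((∑ i, (d i)^2) + ∑ ℓ, Pd ℓ * ((d ᵥ* G) ℓ)^2) := by
  have h1 : ∑ i, d i * b i = ∑ ℓ, (d ᵥ* G) ℓ * s ℓ := by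
    change d ⬝ᵥ b = (d ᵥ* G) ⬝ᵥ s
    rw [← dotProduct_mulVec, ← hb]
  have h2 : ∑ i, ((b + d) i)^2 = ∑ i, (b i)^2 + ∑ i, (d i)^2 + 2 * ∑ i, d i * b i := by
    rw [Finset.mul_sum, ← Finset.sum_add_distrib, ← Finset.sum_add_distrib]
    refine Finset.sum_congr rfl fun i _ => ?_
    simp only [Pi.add_apply]
    ring
  have h3 : ∑ ℓ, Pd ℓ * (((b + d) ᵥ* G) ℓ - a ℓ)^2
      = ∑ ℓ, Pd ℓ * ((b ᵥ* G) ℓ - a ℓ)^2 + ∑ ℓ, Pd ℓ * ((d ᵥ* G) ℓ)^2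
        - 2 * ∑ ℓ, (d ᵥ* G) ℓ * s ℓ := by
    rw [Finset.mul_sum, ← Finset.sum_add_distrib, ← Finset.sum_sub_distrib]
    refine Finset.sum_congr rfl fun ℓ _ => ?_
    rw [add_vecMul, Pi.add_apply, hs]
    ring
  rw [h2, h3, h1]
  ring

/-- MMSE equalization lemma: for fixed integer coefficient vector `a`, the effective
noise variance `f(b) = ‖b‖² + ‖(bᵀHC - aᵀ)P^{1/2}‖²` has a unique minimizer
`b*ᵀ = aᵀ P Cᵀ Hᵀ (I + H C P Cᵀ Hᵀ)⁻¹`, with minimum value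
`aᵀ (P⁻¹ + Cᵀ Hᵀ H C)⁻¹ a`; in particular both matrices are invertible. -/
theorem mmse_equalization
    (N M L : ℕ)
    (H : Matrix (Fin N) (Fin M) ℝ) (C : Matrix (Fin M) (Fin L) ℝ)
    (Pd : Fin L → ℝ) (hPd : ∀ ℓ, 0 < Pd ℓ)
    (a : Fin L → ℝ) :
    let P := Matrix.diagonal Pd
    let f : (Fin N → ℝ) → ℝ := fun b =>
      (∑ i, (b i)^2) + ∑ ℓ, Pd ℓ * ((Matrix.vecMul b (H * C)) ℓ - a ℓ)^2
    let K1 := (1 : Matrix (Fin N) (Fin N) ℝ) + H * C * P * Cᵀ * Hᵀ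
    let K2 := Matrix.diagonal (fun ℓ => (Pd ℓ)⁻¹) + Cᵀ * Hᵀ * H * C
    let bstar := Matrix.vecMul a (P * Cᵀ * Hᵀ * K1⁻¹)
    IsUnit K1 ∧ IsUnit K2 ∧
      f bstar = a ⬝ᵥ K2⁻¹.mulVec a ∧
      ∀ b : Fin N → ℝ, b ≠ bstar → f bstar < f b := by
  intro P f K1 K2 bstar
  set G := H * C with hG
  have hK1 : K1 = 1 + G * P * Gᵀ := by
    simp only [K1, hG, transpose_mul, Matrix.mul_assoc]
  have hK2 : K2 = diagonal (fun ℓ => (Pd ℓ)⁻¹) + Gᵀ * G := by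
    simp only [K2, hG, transpose_mul, Matrix.mul_assoc]
  have hP : P.PosSemidef := PosSemidef.diagonal fun ℓ => (hPd ℓ).le
  have u1 : IsUnit K1 := by
    rw [hK1]
    have := hP.mul_mul_conjTranspose_same G
    rw [conjTranspose_eq_transpose_of_trivial] at this
    exact (PosDef.one.add_posSemidef this).isUnit
  have u2 : IsUnit K2 := by
    rw [hK2]
    have := posSemidef_conjTranspose_mul_self G
    rw [conjTranspose_eq_transpose_of_trivial] at this
    exact ((PosDef.diagonal fun ℓ => inv_pos.mpr (hPd ℓ)).add_posSemidef this).isUnit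
  have d1 : IsUnit K1.det := (isUnit_iff_isUnit_det _).mp u1
  have d2 : IsUnit K2.det := (isUnit_iff_isUnit_det _).mp u2
  have hbK : bstar ᵥ* K1 = a ᵥ* (P * Gᵀ) := by
    simp only [bstar, vecMul_vecMul]
    rw [Matrix.mul_assoc _ _ K1, nonsing_inv_mul _ d1, Matrix.mul_one, hG, transpose_mul,
      Matrix.mul_assoc]
  let s : Fin L → ℝ := (a - bstar ᵥ* G) ᵥ* P
  have hs : ∀ ℓ, s ℓ = Pd ℓ * (a ℓ - (bstar ᵥ* G) ℓ) := fun ℓ => by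
    simp only [s, P, vecMul_diagonal, Pi.sub_apply]
    ring
  -- The normal equation `b* (I + G P Gᵀ) = a P Gᵀ` rearranges to stationarity.
  have hb : bstar = G *ᵥ s := by
    rw [hK1, vecMul_add, vecMul_one] at hbK
    rw [← vecMul_transpose]
    simp only [s, sub_vecMul, vecMul_vecMul]
    rw [← hbK]
    simp
  have hsK : K2 *ᵥ s = a := by
    rw [hK2, add_mulVec, ← mulVec_mulVec, ← hb, mulVec_transpose]
    ext ℓ
    rw [Pi.add_apply, mulVec_diagonal, hs, inv_mul_cancel_left₀ (hPd ℓ).ne']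
    ring
  refine ⟨u1, u2, ?_, fun b hne => ?_⟩
  · have : K2⁻¹ *ᵥ a = s := by
      rw [← hsK, mulVec_mulVec, nonsing_inv_mul _ d2, one_mulVec]
    rw [this]
    exact value_of_stationary G Pd a s bstar hs hb
  · have key := expand_of_stationary G Pd a s bstar (b - bstar) hs hb
    rw [add_sub_cancel] at key
    change f b = f bstar + _ at key
    obtain ⟨i, hi⟩ := Function.ne_iff.mp hne
    have hpos : 0 < ∑ i, ((b - bstar) i)^2 :=
      Finset.sum_pos' (fun i _ => sq_nonneg _)
        ⟨i, Finset.mem_univ i, sq_pos_of_ne_zero (sub_ne_zero.mpr hi)⟩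
    have hnn : 0 ≤ ∑ ℓ, Pd ℓ * (((b - bstar) ᵥ* G) ℓ)^2 :=
      Finset.sum_nonneg fun ℓ _ => mul_nonneg (hPd ℓ).le (sq_nonneg _)
    linarith
end

section
/- Let H_ℓ ∈ ℝ^{N×M_ℓ} for ℓ = 1,…,L, let b ∈ ℝ^N with b ≠ 0, let c_ℓ ∈ ℝ^{M_ℓ}, let P_1,…,P_L ≥ 0 with P_m > 0 for a fixed index m, and write g_ℓ := bᵀH_ℓc_ℓ. Then the minimum over α ∈ ℝ of the scaled effective noise variance α²‖b‖² + ∑_{ℓ=1}^L P_ℓ·(α·g_ℓ − δ_{m,ℓ})² (where δ is the Kronecker delta) equals P_m/(1 + SINR_m), where SINR_m := P_m·g_m² / (‖b‖² + ∑_{ℓ≠m} P_ℓ·g_ℓ²). Equivalently, with the minimizing scaling, the effective SINR of integer-forcing with the identity integer vector satisfies P_m/σ² = 1 + SINR_m. -/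
/-!
Split off the `m`-th summand and let `D > 0` be the noise-plus-interference power
`‖b‖² + ∑_{ℓ ≠ m} P_ℓ g_ℓ²`. The effective noise variance is then the scalar quadratic
`α² D + P_m (α g_m - 1)²`, and completing the square around the MMSE coefficient
`P_m g_m / (D + P_m g_m²)` leaves the constant term
`P_m D / (D + P_m g_m²) = P_m / (1 + SINR_m)`.
-/

open Matrix

/-- Integer-forcing subsumes conventional linear receivers (Remark 2): with integer
coefficient vector equal to the `m`-th standard basis vector and an optimally scaled
equalization vector `α·b`, the minimum effective noise variance equals
`P_m / (1 + SINR_m)`. -/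
theorem integer_forcing_achieves_linear_rate
    (L N : ℕ) (Mdim : Fin L → ℕ)
    (H : ∀ ℓ, Matrix (Fin N) (Fin (Mdim ℓ)) ℝ)
    (b : Fin N → ℝ) (hb : b ≠ 0)
    (c : ∀ ℓ, Fin (Mdim ℓ) → ℝ)
    (P : Fin L → ℝ) (hP : ∀ ℓ, 0 ≤ P ℓ)
    (m : Fin L) (hPm : 0 < P m)
    (g : Fin L → ℝ) (hg : ∀ ℓ, g ℓ = b ⬝ᵥ (H ℓ).mulVec (c ℓ))
    (SINR : ℝ)
    (hSINR : SINR = P m * (g m)^2 /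
      ((∑ i, (b i)^2) + ∑ ℓ ∈ Finset.univ.erase m, P ℓ * (g ℓ)^2)) :
    IsLeast (Set.range fun α : ℝ =>
        α^2 * (∑ i, (b i)^2) +
          ∑ ℓ, P ℓ * (α * g ℓ - if ℓ = m then 1 else 0)^2)
      (P m / (1 + SINR)) := by
  have hB : 0 < ∑ i, (b i)^2 := by
    obtain ⟨i, hi⟩ := Function.ne_iff.mp hb
    exact Finset.sum_pos' (fun j _ => sq_nonneg (b j))
      ⟨i, Finset.mem_univ i, sq_pos_of_ne_zero hi⟩
  have hS : 0 ≤ ∑ ℓ ∈ Finset.univ.erase m, P ℓ * (g ℓ)^2 :=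
    Finset.sum_nonneg fun ℓ _ => mul_nonneg (hP ℓ) (sq_nonneg _)
  have hsplit : ∀ α : ℝ,
      α^2 * (∑ i, (b i)^2) + ∑ ℓ, P ℓ * (α * g ℓ - if ℓ = m then 1 else 0)^2
        = α^2 * ((∑ i, (b i)^2) + ∑ ℓ ∈ Finset.univ.erase m, P ℓ * (g ℓ)^2)
          + P m * (α * g m - 1)^2 := by
    intro α
    have hoff : ∑ ℓ ∈ Finset.univ.erase m, P ℓ * (α * g ℓ - if ℓ = m then 1 else 0)^2
        = α^2 * ∑ ℓ ∈ Finset.univ.erase m, P ℓ * (g ℓ)^2 := by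
      rw [Finset.mul_sum]
      refine Finset.sum_congr rfl fun ℓ hℓ => ?_
      rw [if_neg (Finset.ne_of_mem_erase hℓ)]
      ring
    rw [← Finset.add_sum_erase _ _ (Finset.mem_univ m), hoff, if_pos rfl]
    ring
  simp only [hsplit]
  generalize (∑ i, (b i)^2) = B at *
  generalize (∑ ℓ ∈ Finset.univ.erase m, P ℓ * (g ℓ)^2) = S at *
  obtain ⟨D, hD⟩ : ∃ D, D = B + S := ⟨_, rfl⟩
  have hDpos : 0 < D := by linarith
  rw [← hD] at hSINR ⊢
  have hE : 0 < D + P m * (g m)^2 := by positivity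
  have hmin : P m / (1 + SINR) = P m * D / (D + P m * (g m)^2) := by
    rw [hSINR]
    field_simp
  have hsq : ∀ α : ℝ, α^2 * D + P m * (α * g m - 1)^2
      = P m / (1 + SINR)
        + (D + P m * (g m)^2) * (α - P m * g m / (D + P m * (g m)^2))^2 := by
    intro α
    rw [hmin]
    field_simp
    ring
  constructor
  · refine ⟨P m * g m / (D + P m * (g m)^2), ?_⟩
    simp only [hsq]
    simp
  · rintro _ ⟨α, rfl⟩
    simp only [hsq]
    exact le_add_of_nonneg_right (mul_nonneg hE.le (sq_nonneg _))
end

section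
/- Let H ∈ ℝ^{N×M}, C ∈ ℝ^{M×L}, and let P ∈ ℝ^{L×L} be diagonal with strictly positive diagonal entries P_1,…,P_L. Then there exists a full-rank integer matrix A ∈ ℤ^{L×L} with rows a_mᵀ such that, setting σ_m² := a_mᵀ·(P⁻¹ + Cᵀ·Hᵀ·H·C)⁻¹·a_m, the integer-forcing sum rate satisfies ∑_{m=1}^L (1/2)·log⁺(P_m/σ_m²) ≥ (1/2)·log det(I + H·C·P·Cᵀ·Hᵀ) − (L/2)·log L. -/
open Matrix

/-!
Put `G = (P⁻¹ + Cᵀ Hᵀ H C)⁻¹`, a positive definite matrix. Since `log⁺ ≥ log`, and since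
`det (1 + H C P Cᵀ Hᵀ) = det P / det G` by the Weinstein–Aronszajn identity, it suffices to find a
nonsingular integer matrix with rows `a_m` such that `∏ a_mᵀ G a_m ≤ L ^ L * det G`. This is
Minkowski's second theorem for the ellipsoid of `G` (`exists_prod_quad_le`).

It is derived from Minkowski's convex body theorem applied to a cube inscribed in the unit ball
(`one_le_of_forall_one_le_sq`). Among all nonsingular integer matrices choose `A` minimizing
`∑ a_mᵀ G a_m`, with rows sorted by increasing `λ_m = a_mᵀ G a_m`. If an integer vector
`x = ∑ c_j a_j` has `c_k ≠ 0`, exchanging `a_k` for `x` keeps the matrix nonsingular, so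
`xᵀ G x ≥ λ_k`. Write `A G Aᵀ = U Uᵀ` with `U` lower triangular and rescale the `i`-th orthogonal
coordinate `(Uᵀ c)_i` by `λ_i ^ (-1/2)`. If `k` is the last index with `c_k ≠ 0`, only the
coordinates `i ≤ k` occur, and `λ_i ≤ λ_k` there, so the rescaled form is at least
`xᵀ G x / λ_k ≥ 1` at every nonzero integer `x`. The rescaled form has determinant
`det G / ∏ λ_m`, and the convex body theorem bounds it below by `L ^ (-L)`.
-/

/-- The quadratic form `x ↦ xᵀ G x`. -/
def quad {L : ℕ} (G : Matrix (Fin L) (Fin L) ℝ) (x : Fin L → ℝ) : ℝ := x ⬝ᵥ G *ᵥ x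

/-- Cholesky decomposition: the LDL decomposition with the square root of the diagonal absorbed
into the triangular factor. -/
lemma exists_cholesky {L : ℕ} {S : Matrix (Fin L) (Fin L) ℝ} (hS : S.PosDef) :
    ∃ U : Matrix (Fin L) (Fin L) ℝ, U * Uᵀ = S ∧ ∀ i j, i < j → U i j = 0 := by
  have hd : ∀ i, 0 ≤ LDL.diagEntries hS i := by
    intro i
    have h := hS.posSemidef.mul_mul_conjTranspose_same (LDL.lowerInv hS)
    rw [← LDL.diag_eq_lowerInv_conj] at h
    simpa [LDL.diag] using h.diag_nonneg (i := i)
  have htri : (LDL.lower hS).BlockTriangular OrderDual.toDual := by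
    have h : (LDL.lowerInv hS).BlockTriangular OrderDual.toDual := by
      intro i j hij
      exact LDL.lowerInv_triangular hS hij
    exact blockTriangular_inv_of_blockTriangular h
  refine ⟨LDL.lower hS * diagonal fun i => √(LDL.diagEntries hS i), ?_, ?_⟩
  · conv_rhs => rw [← LDL.lower_conj_diag hS]
    rw [transpose_mul, diagonal_transpose, ← Matrix.mul_assoc, Matrix.mul_assoc (LDL.lower hS),
      diagonal_mul_diagonal, conjTranspose_eq_transpose_of_trivial, LDL.diag]
    simp [Real.mul_self_sqrt (hd _)]
  · intro i j hij
    rw [mul_diagonal, htri hij, zero_mul]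

lemma quad_mul_transpose {L : ℕ} (U : Matrix (Fin L) (Fin L) ℝ) (x : Fin L → ℝ) :
    quad (U * Uᵀ) x = ∑ i, (Uᵀ *ᵥ x) i ^ 2 := by
  rw [quad, ← mulVec_mulVec, dotProduct_mulVec, ← mulVec_transpose, dotProduct]
  simp [sq]

/-- Minkowski's convex body theorem for the lattice `ℤ ^ L` and the parallelepiped
`{x | ∀ i, |(B x)_i| < 1 / √L}`, on which `‖B x‖ < 1`. -/
lemma one_le_of_forall_one_le_sq {L : ℕ} (hL : 0 < L) (B : Matrix (Fin L) (Fin L) ℝ)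
    (hB : B.det ≠ 0)
    (h : ∀ x : Fin L → ℤ, x ≠ 0 → 1 ≤ ∑ i, (B *ᵥ fun j => (x j : ℝ)) i ^ 2) :
    1 ≤ (L : ℝ) ^ L * B.det ^ 2 := by
  by_contra! hlt
  have hL' : (0 : ℝ) < L := by exact_mod_cast hL
  have hs : 0 < √(L : ℝ) := Real.sqrt_pos.2 hL'
  have hdet : LinearMap.det (toLin' B) = B.det := LinearMap.det_toLin' B
  set r : ℝ := 1 / √(L : ℝ) with hr
  have hr0 : 0 < r := by positivity
  have hlt' : √(L : ℝ) ^ L * |B.det| < 1 := by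
    have : (√(L : ℝ) ^ L * |B.det|) ^ 2 < 1 := by
      rw [mul_pow, sq_abs, ← pow_mul, mul_comm L 2, pow_mul, Real.sq_sqrt hL'.le]
      exact hlt
    exact (sq_lt_one_iff₀ (by positivity)).1 this
  let b := Pi.basisFun ℝ (Fin L)
  have hfund := ZSpan.isAddFundamentalDomain' b MeasureTheory.volume
  have : Countable (Submodule.span ℤ (Set.range b)).toAddSubgroup := by
    change Countable (Submodule.span ℤ (Set.range b))
    infer_instance
  obtain ⟨⟨x, hx⟩, hx0, hmem⟩ :=
    MeasureTheory.exists_ne_zero_mem_lattice_of_measure_mul_two_pow_lt_measure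
      (s := toLin' B ⁻¹' Metric.ball 0 r) hfund
      (by
        intro x hx
        simpa [mulVec_neg] using hx)
      ((convex_ball (0 : Fin L → ℝ) r).linear_preimage (toLin' B))
      (by
        rw [MeasureTheory.Measure.addHaar_preimage_linearMap _ (by rwa [hdet]), hdet,
          Real.volume_pi_ball _ hr0, ZSpan.fundamentalDomain_pi_basisFun, MeasureTheory.volume_pi,
          MeasureTheory.Measure.pi_pi, ← ENNReal.ofReal_mul (abs_nonneg _)]
        simp only [Real.volume_Ico, sub_zero, ENNReal.ofReal_one, Finset.prod_const_one, one_mul,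
          Module.finrank_fintype_fun_eq_card, Fintype.card_fin]
        rw [← ENNReal.ofReal_ofNat 2, ← ENNReal.ofReal_pow (by norm_num)]
        rw [ENNReal.ofReal_lt_ofReal_iff (by positivity)]
        have hB' : 0 < |B.det| := abs_pos.2 hB
        rw [abs_inv, hr, mul_pow, div_pow, one_pow, ← div_eq_inv_mul, lt_div_iff₀ hB',
          mul_lt_mul_iff_right₀ (by positivity), lt_div_iff₀ (by positivity), mul_comm]
        exact hlt')
  have hint : ∀ i, ∃ z : ℤ, (z : ℝ) = x i := by
    have h2 := (b.mem_span_iff_repr_mem ℤ x).1 hx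
    intro i
    simpa [b] using h2 i
  choose z hz using hint
  have hxz : (fun j => (z j : ℝ)) = x := funext hz
  have hz0 : z ≠ 0 := by
    rintro rfl
    apply hx0
    ext i
    simp [← hz i]
  have h1 := h z hz0
  rw [hxz] at h1
  have hmem' : B *ᵥ x ∈ Metric.ball (0 : Fin L → ℝ) r := hmem
  rw [mem_ball_zero_iff, pi_norm_lt_iff hr0] at hmem'
  have h3 : ∑ i, (B *ᵥ x) i ^ 2 < ∑ i : Fin L, r ^ 2 := by
    apply Finset.sum_lt_sum_of_nonempty
    · exact ⟨⟨0, hL⟩, Finset.mem_univ _⟩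
    · intro i _
      rw [sq_lt_sq, abs_of_pos hr0]
      exact hmem' i
  have h4 : ∑ i : Fin L, r ^ 2 = 1 := by
    simp only [Finset.sum_const, Finset.card_univ, Fintype.card_fin, nsmul_eq_mul, hr, div_pow,
      one_pow, Real.sq_sqrt hL'.le]
    field_simp
  linarith

/-- A positive definite form bounds each coordinate: sublevel sets are bounded. -/
lemma exists_abs_le_of_quad_le {L : ℕ} {G : Matrix (Fin L) (Fin L) ℝ} (hG : G.PosDef) (t : ℝ) :
    ∃ K : ℝ, ∀ x, quad G x ≤ t → ∀ i, |x i| ≤ K := by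
  obtain ⟨U, hU, -⟩ := exists_cholesky hG
  have hUt : IsUnit Uᵀ.det := by
    have := hG.det_pos
    rw [← hU, det_mul] at this
    exact (right_ne_zero_of_mul this.ne').isUnit
  refine ⟨∑ i, ∑ j, |(Uᵀ)⁻¹ i j| * √t, fun x hx i => ?_⟩
  have hxw : x = (Uᵀ)⁻¹ *ᵥ (Uᵀ *ᵥ x) := by
    rw [mulVec_mulVec, nonsing_inv_mul _ hUt, one_mulVec]
  rw [← hU, quad_mul_transpose] at hx
  have hw : ∀ j, |(Uᵀ *ᵥ x) j| ≤ √t := by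
    intro j
    apply Real.abs_le_sqrt
    exact (Finset.single_le_sum (f := fun j => (Uᵀ *ᵥ x) j ^ 2)
      (fun j _ => sq_nonneg _) (Finset.mem_univ j)).trans hx
  calc |x i| = |∑ j, (Uᵀ)⁻¹ i j * (Uᵀ *ᵥ x) j| := by
        conv_lhs => rw [hxw]
        rfl
    _ ≤ ∑ j, |(Uᵀ)⁻¹ i j * (Uᵀ *ᵥ x) j| := Finset.abs_sum_le_sum_abs _ _
    _ ≤ ∑ j, |(Uᵀ)⁻¹ i j| * √t := by
        gcongr with j
        rw [abs_mul]
        gcongr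
        exact hw j
    _ ≤ _ := Finset.single_le_sum (f := fun i => ∑ j, |(Uᵀ)⁻¹ i j| * √t)
        (fun i _ => by positivity) (Finset.mem_univ i)

lemma quad_nonneg {L : ℕ} {G : Matrix (Fin L) (Fin L) ℝ} (hG : G.PosDef) (x : Fin L → ℝ) :
    0 ≤ quad G x := by
  simpa [quad] using hG.posSemidef.dotProduct_mulVec_nonneg x

lemma quad_pos {L : ℕ} {G : Matrix (Fin L) (Fin L) ℝ} (hG : G.PosDef) {x : Fin L → ℝ}
    (hx : x ≠ 0) : 0 < quad G x := by
  simpa [quad] using hG.dotProduct_mulVec_pos hx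

/-- The sum of the values of the form `G` at the rows of `A`. -/
def rowCost {L : ℕ} (G : Matrix (Fin L) (Fin L) ℝ) (A : Matrix (Fin L) (Fin L) ℤ) : ℝ :=
  ∑ m, quad G (fun i => (A m i : ℝ))

/-- A cost-minimizing nonsingular integer matrix exists, because only finitely many integer
matrices have cost at most that of the identity; its rows can be sorted by cost. -/
lemma exists_min_sorted {L : ℕ} {G : Matrix (Fin L) (Fin L) ℝ} (hG : G.PosDef) :
    ∃ A : Matrix (Fin L) (Fin L) ℤ, A.det ≠ 0 ∧
      (∀ A' : Matrix (Fin L) (Fin L) ℤ, A'.det ≠ 0 → rowCost G A ≤ rowCost G A') ∧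
      Monotone fun m => quad G (fun i => (A m i : ℝ)) := by
  obtain ⟨K, hK⟩ := exists_abs_le_of_quad_le hG (rowCost G 1)
  have hfin : {A : Matrix (Fin L) (Fin L) ℤ | A.det ≠ 0 ∧ rowCost G A ≤ rowCost G 1}.Finite := by
    have hbox : (Set.Icc (fun _ _ => -⌊K⌋) (fun _ _ => ⌊K⌋) : Set (Fin L → Fin L → ℤ)).Finite :=
      Set.finite_Icc _ _
    refine Set.Finite.subset hbox ?_
    rintro A ⟨-, hA⟩
    have hb : ∀ m i, |A m i| ≤ ⌊K⌋ := by
      intro m i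
      rw [Int.le_floor]
      push_cast
      refine hK (fun i => (A m i : ℝ)) ?_ i
      exact (Finset.single_le_sum (f := fun m => quad G (fun i => (A m i : ℝ)))
        (fun m _ => quad_nonneg hG _) (Finset.mem_univ m)).trans hA
    exact ⟨fun m i => (abs_le.1 (hb m i)).1, fun m i => (abs_le.1 (hb m i)).2⟩
  obtain ⟨A, ⟨hA0, hA1⟩, hmin⟩ := Set.exists_min_image _ (rowCost G) hfin ⟨1, by simp⟩
  have hmin' : ∀ A' : Matrix (Fin L) (Fin L) ℤ, A'.det ≠ 0 → rowCost G A ≤ rowCost G A' := by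
    intro A' hA'
    rcases le_total (rowCost G A') (rowCost G 1) with h | h
    · exact hmin A' ⟨hA', h⟩
    · exact hA1.trans h
  let σ := Tuple.sort fun m => quad G (fun i => (A m i : ℝ))
  refine ⟨A.submatrix σ id, ?_, ?_, ?_⟩
  · rw [det_permute]
    exact mul_ne_zero (by simp) hA0
  · intro A' hA'
    refine le_of_eq_of_le ?_ (hmin' A' hA')
    exact Equiv.sum_comp σ fun m => quad G (fun i => (A m i : ℝ))
  · exact Tuple.monotone_sort fun m => quad G (fun i => (A m i : ℝ))

/-- Exchange step: replacing the row `a_k` of a cost-minimizing matrix by an integer vector `x`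
whose real expansion `∑ c_j a_j` has `c_k ≠ 0` keeps the matrix nonsingular, so it cannot lower the
cost. -/
lemma quad_row_le {L : ℕ} {G : Matrix (Fin L) (Fin L) ℝ} {A : Matrix (Fin L) (Fin L) ℤ}
    (hA : A.det ≠ 0)
    (hmin : ∀ A' : Matrix (Fin L) (Fin L) ℤ, A'.det ≠ 0 → rowCost G A ≤ rowCost G A')
    (x : Fin L → ℤ) (c : Fin L → ℝ)
    (hxc : (fun i => (x i : ℝ)) = (A.map (Int.cast : ℤ → ℝ))ᵀ *ᵥ c) (k : Fin L) (hk : c k ≠ 0) :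
    quad G (fun i => (A k i : ℝ)) ≤ quad G (fun i => (x i : ℝ)) := by
  have hdetA : ((A.det : ℤ) : ℝ) = (A.map (Int.cast : ℤ → ℝ)).det :=
    (Int.castRingHom ℝ).map_det A
  have hdet : (A.updateRow k x).det ≠ 0 := by
    have h1 : (((A.updateRow k x).det : ℤ) : ℝ) = c k * (A.det : ℤ) := by
      have h2 : (((A.updateRow k x).det : ℤ) : ℝ)
          = ((A.updateRow k x).map (Int.cast : ℤ → ℝ)).det := (Int.castRingHom ℝ).map_det _
      have h3 : (A.updateRow k x).map (Int.cast : ℤ → ℝ) =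
          (A.map (Int.cast : ℤ → ℝ)).updateRow k
            (∑ j, c j • (A.map (Int.cast : ℤ → ℝ)) j) := by
        rw [map_updateRow]
        congr 1
        change (fun i => (x i : ℝ)) = _
        rw [hxc]
        ext i
        simp [mulVec, dotProduct, mul_comm]
      rw [h2, h3, det_updateRow_sum, hdetA, smul_eq_mul]
    have hAr : ((A.det : ℤ) : ℝ) ≠ 0 := by exact_mod_cast hA
    intro h0
    rw [h0, Int.cast_zero] at h1
    exact mul_ne_zero hk hAr h1.symm
  have h := hmin _ hdet
  rw [rowCost, rowCost, ← Finset.add_sum_erase _ _ (Finset.mem_univ k),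
    ← Finset.add_sum_erase (a := k) _ (fun m => quad G fun i => ((A.updateRow k x m i : ℤ) : ℝ))
      (Finset.mem_univ k)] at h
  have he : ∑ m ∈ Finset.univ.erase k, quad G (fun i => ((A.updateRow k x m i : ℤ) : ℝ)) =
      ∑ m ∈ Finset.univ.erase k, quad G (fun i => (A m i : ℝ)) := by
    refine Finset.sum_congr rfl fun m hm => ?_
    rw [updateRow_ne (Finset.ne_of_mem_erase hm)]
  rw [he, updateRow_self] at h
  linarith

/-- Minkowski's second theorem for ellipsoids, with the constant `L ^ L`. -/
lemma exists_prod_quad_le {L : ℕ} (hL : 0 < L) {G : Matrix (Fin L) (Fin L) ℝ} (hG : G.PosDef) :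
    ∃ A : Matrix (Fin L) (Fin L) ℤ, A.det ≠ 0 ∧
      (∀ m, 0 < quad G (fun i => (A m i : ℝ))) ∧
      ∏ m, quad G (fun i => (A m i : ℝ)) ≤ (L : ℝ) ^ L * G.det := by
  obtain ⟨A, hA, hmin, hmono⟩ := exists_min_sorted hG
  set R : Matrix (Fin L) (Fin L) ℝ := A.map (Int.cast : ℤ → ℝ) with hR
  set l : Fin L → ℝ := fun m => quad G (fun i => (A m i : ℝ)) with hl
  have hRdet : R.det ≠ 0 := by
    have h : ((A.det : ℤ) : ℝ) = R.det := (Int.castRingHom ℝ).map_det A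
    rw [← h]
    exact_mod_cast hA
  have hRt : IsUnit Rᵀ.det := by
    rw [det_transpose]
    exact hRdet.isUnit
  have hpos : ∀ m, 0 < l m := by
    intro m
    refine quad_pos hG fun h0 => hRdet (det_eq_zero_of_row_eq_zero m fun j => ?_)
    exact congrFun h0 j
  refine ⟨A, hA, hpos, ?_⟩
  have hS : (R * G * Rᵀ).PosDef := by
    have h := hG.conjTranspose_mul_mul_same (B := Rᵀ)
      (mulVec_injective_iff_isUnit.2 ((isUnit_iff_isUnit_det _).2 hRt))
    simpa using h
  obtain ⟨U, hU, htri⟩ := exists_cholesky hS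
  have hUdet : U.det ^ 2 = R.det ^ 2 * G.det := by
    have h := congrArg det hU
    simp only [det_mul, det_transpose] at h
    linarith
  have hU0 : U.det ≠ 0 := by
    intro h
    rw [h] at hUdet
    have := hG.det_pos
    have : 0 < R.det ^ 2 * G.det := by positivity
    linarith
  set B : Matrix (Fin L) (Fin L) ℝ := diagonal (fun i => (√(l i))⁻¹) * Uᵀ * (Rᵀ)⁻¹ with hB
  have hBdet : B.det = (∏ i, (√(l i))⁻¹) * U.det * R.det⁻¹ := by
    rw [hB, det_mul, det_mul, det_diagonal, det_transpose, det_nonsing_inv, det_transpose,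
      Ring.inverse_eq_inv']
  have hprod : 0 < ∏ i, l i := Finset.prod_pos fun i _ => hpos i
  have hsq : (∏ i, (√(l i))⁻¹) ^ 2 = (∏ i, l i)⁻¹ := by
    rw [← Finset.prod_pow, ← Finset.prod_inv_distrib]
    refine Finset.prod_congr rfl fun i _ => ?_
    rw [inv_pow, Real.sq_sqrt (hpos i).le]
  have hBsq : B.det ^ 2 = G.det / ∏ i, l i := by
    rw [hBdet, mul_pow, mul_pow, hsq, hUdet]
    field_simp
  have key := one_le_of_forall_one_le_sq hL B ?_ ?_
  · rw [hBsq, ← mul_div_assoc, le_div_iff₀ hprod, one_mul] at key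
    exact key
  · rw [← sq_eq_zero_iff.ne, hBsq]
    exact (div_pos hG.det_pos hprod).ne'
  · intro x hx
    set c : Fin L → ℝ := (Rᵀ)⁻¹ *ᵥ fun j => (x j : ℝ) with hc
    have hxc : (fun i => (x i : ℝ)) = Rᵀ *ᵥ c := by
      rw [hc, mulVec_mulVec, mul_nonsing_inv _ hRt, one_mulVec]
    have hc0 : (Finset.univ.filter fun j => c j ≠ 0).Nonempty := by
      rw [Finset.nonempty_iff_ne_empty]
      intro h
      apply hx
      have hcz : c = 0 := by
        ext j
        by_contra hj
        have : j ∈ Finset.univ.filter fun j => c j ≠ 0 := by simpa using hj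
        rw [h] at this
        simp at this
      rw [hcz, mulVec_zero] at hxc
      ext i
      simpa using congrFun hxc i
    -- `k` is the last index with `c k ≠ 0`
    obtain ⟨k, hk, hkmax⟩ := Finset.exists_max_image _ id hc0
    have hck : c k ≠ 0 := by simpa using hk
    have hzero : ∀ j, k < j → c j = 0 := by
      intro j hj
      by_contra h
      exact absurd (hkmax j (by simpa using h)) (not_le.2 hj)
    have hq : quad G (fun i => (x i : ℝ)) = ∑ i, (Uᵀ *ᵥ c) i ^ 2 := by
      rw [← quad_mul_transpose, hU, hxc, quad, quad, ← mulVec_mulVec, ← mulVec_mulVec,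
        dotProduct_mulVec c R, ← mulVec_transpose]
    have hle := quad_row_le hA hmin x c hxc k hck
    have hBx : ∀ i, (B *ᵥ fun j => (x j : ℝ)) i ^ 2 = (Uᵀ *ᵥ c) i ^ 2 / l i := by
      intro i
      rw [hB, ← mulVec_mulVec, ← hc, ← mulVec_mulVec, mulVec_diagonal, mul_pow, inv_pow,
        Real.sq_sqrt (hpos i).le]
      field_simp
    have hterm : ∀ i, (Uᵀ *ᵥ c) i ^ 2 / l k ≤ (B *ᵥ fun j => (x j : ℝ)) i ^ 2 := by
      intro i
      rw [hBx]
      rcases le_or_gt i k with hik | hik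
      · exact div_le_div_of_nonneg_left (sq_nonneg _) (hpos i) (hmono hik)
      -- beyond `k` the coordinate `∑ j, U j i * c j` vanishes by triangularity
      · have h0 : (Uᵀ *ᵥ c) i = 0 := by
          change ∑ j, Uᵀ i j * c j = 0
          refine Finset.sum_eq_zero fun j _ => ?_
          rcases lt_or_ge k j with hj | hj
          · rw [hzero j hj, mul_zero]
          · rw [transpose_apply, htri j i (hj.trans_lt hik), zero_mul]
        simp [h0]
    calc (1 : ℝ) ≤ quad G (fun i => (x i : ℝ)) / l k := by
          rw [le_div_iff₀ (hpos k), one_mul]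
          exact hle
      _ = ∑ i, (Uᵀ *ᵥ c) i ^ 2 / l k := by rw [hq, Finset.sum_div]
      _ ≤ _ := Finset.sum_le_sum fun i _ => hterm i

/-- Uplink constant-gap result: with the MMSE-optimal equalizer, the effective noise
variance for integer vector `a_m` is `a_mᵀ (P⁻¹ + Cᵀ Hᵀ H C)⁻¹ a_m`, and a good
full-rank integer matrix `A` brings the integer-forcing sum rate within
`(L/2) log L` bits of `(1/2) log det(I + H C P Cᵀ Hᵀ)`. -/
theorem uplink_integer_forcing_constant_gap
    (N M L : ℕ) (hL : 0 < L)
    (H : Matrix (Fin N) (Fin M) ℝ) (C : Matrix (Fin M) (Fin L) ℝ)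
    (Pd : Fin L → ℝ) (hPd : ∀ ℓ, 0 < Pd ℓ) :
    ∃ A : Matrix (Fin L) (Fin L) ℤ, A.det ≠ 0 ∧
      (∑ m, (1/2 : ℝ) * max 0 (Real.logb 2 (Pd m /
          ((fun i => (A m i : ℝ)) ⬝ᵥ
            ((Matrix.diagonal (fun ℓ => (Pd ℓ)⁻¹) + Cᵀ * Hᵀ * H * C)⁻¹).mulVec
              (fun i => (A m i : ℝ)))))) ≥
        (1/2 : ℝ) * Real.logb 2 ((1 + H * C * Matrix.diagonal Pd * Cᵀ * Hᵀ).det) -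
          ((L : ℝ)/2) * Real.logb 2 L := by
  set F : Matrix (Fin L) (Fin L) ℝ :=
    Matrix.diagonal (fun ℓ => (Pd ℓ)⁻¹) + Cᵀ * Hᵀ * H * C with hF
  have hFpos : F.PosDef := by
    refine (PosDef.diagonal fun i => inv_pos.2 (hPd i)).add_posSemidef ?_
    have h := posSemidef_conjTranspose_mul_self (H * C)
    simpa [Matrix.mul_assoc] using h
  have hP : 0 < ∏ m, Pd m := Finset.prod_pos fun i _ => hPd i
  have hdet : (1 + H * C * Matrix.diagonal Pd * Cᵀ * Hᵀ).det = (∏ m, Pd m) * F.det := by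
    have h1 : 1 + H * C * Matrix.diagonal Pd * Cᵀ * Hᵀ =
        1 + (H * C) * (Matrix.diagonal Pd * Cᵀ * Hᵀ) := by simp only [Matrix.mul_assoc]
    have h2 : 1 + (Matrix.diagonal Pd * Cᵀ * Hᵀ) * (H * C) = Matrix.diagonal Pd * F := by
      rw [hF, Matrix.mul_add, diagonal_mul_diagonal]
      have h3 : (fun i => Pd i * (Pd i)⁻¹) = fun _ => 1 :=
        funext fun i => mul_inv_cancel₀ (hPd i).ne'
      rw [h3, diagonal_one]
      simp only [Matrix.mul_assoc]
    rw [h1, det_one_add_mul_comm, h2, det_mul, det_diagonal]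
  obtain ⟨A, hA, hpos, hle⟩ := exists_prod_quad_le hL hFpos.inv
  refine ⟨A, hA, ?_⟩
  change _ ≤ ∑ m, (1/2 : ℝ) * max 0 (Real.logb 2 (Pd m / quad F⁻¹ (fun i => (A m i : ℝ))))
  set l : Fin L → ℝ := fun m => quad F⁻¹ (fun i => (A m i : ℝ)) with hl
  have hprod : 0 < ∏ i, l i := Finset.prod_pos fun i _ => hpos i
  have hL' : (0 : ℝ) < L := by exact_mod_cast hL
  have hFd := hFpos.det_pos
  rw [det_nonsing_inv, Ring.inverse_eq_inv'] at hle
  have hlog : Real.logb 2 ((∏ m, Pd m) * F.det) - L * Real.logb 2 L ≤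
      ∑ m, Real.logb 2 (Pd m / l m) := by
    rw [← Real.logb_prod _ _ fun m _ => (div_pos (hPd m) (hpos m)).ne', Finset.prod_div_distrib,
      ← Real.logb_pow, ← Real.logb_div (by positivity) (by positivity)]
    refine Real.logb_le_logb_of_le (by norm_num) (by positivity) ?_
    rw [div_le_div_iff₀ (by positivity) hprod]
    have h := mul_le_mul_of_nonneg_left hle (mul_pos hP hFd).le
    refine h.trans_eq ?_
    field_simp
  calc _ = (1/2 : ℝ) * (Real.logb 2 ((∏ m, Pd m) * F.det) - L * Real.logb 2 L) := by
        rw [hdet]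
        ring
    _ ≤ (1/2 : ℝ) * ∑ m, Real.logb 2 (Pd m / l m) := by gcongr
    _ = ∑ m, (1/2 : ℝ) * Real.logb 2 (Pd m / l m) := Finset.mul_sum _ _ _
    _ ≤ _ := by
        gcongr with m
        exact le_max_right _ _
end
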